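/- Let x : [0,∞) → ℝⁿ be a solution of the feedback-linearization dynamics ẋ(t) = -T(x(t))(∇f(x(t)) + J_h(x(t))ᵀ λ(t)) with λ(t) = -(J_h(x(t))T(x(t))J_h(x(t))ᵀ)⁻¹(J_h(x(t))T(x(t))∇f(x(t)) - K h(x(t))), where K = diag(k₁,…,k_m) with each k_i > 0. Assume ‖∇f(x)‖ < M and ‖J_h(x)‖ < M for all x, f(x) ≥ f_min for all x, and (J_h(x)J_h(x)ᵀ)⁻¹ ≺ D² I for all x. Define ℓ(x) := f(x) + (λ_max/λ_min)(MD)² Σ_{i=1}^m |h_i(x)|. Then t ↦ ℓ(x(t)) is non-increasing on [0,∞). -/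

import Mathlib

/-!
Along the flow, `J ẋ = -K h`, so each `hᵢ ∘ x` solves `y' = -kᵢ y` and
`|hᵢ (x t)| = |hᵢ (x 0)| e^{-kᵢ t}`; in particular the penalty `∑ |hᵢ (x t)|` is differentiable in
`t ≥ 0`, with derivative `-∑ kᵢ |hᵢ|`, even where some `hᵢ` vanishes.

Put `S = J T Jᵀ`, `w = S⁻¹ J T ∇f` and `z = Jᵀ w`. Since `z` is the `T`-orthogonal projection of `∇f`
onto the range of `Jᵀ`, one gets
`(f ∘ x)' = -(∇f - z)ᵀ T (∇f - z) - w ⬝ K h ≤ ∑ |wᵢ| kᵢ |hᵢ|` (`dot_velocity_le`).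
It remains to bound `|wᵢ| ≤ |w| ≤ (λ_max/λ_min) (M D)²` (`abs_multiplier_le`): the projection
property gives `λ_min |z|² ≤ zᵀ T z ≤ ∇fᵀ T ∇f ≤ λ_max M²`, while the hypotheses on `J` give
`|w|² ≤ D² |z|²` and `|z|² ≤ M² |w|²`; the last two force `(M D)² ≥ 1` unless `w = 0`.
-/

open Matrix Filter Set

noncomputable section

/-- Euclidean norm of a finite real vector. -/
def euclNorm {n : ℕ} (v : Fin n → ℝ) : ℝ := Real.sqrt (∑ i, v i ^ 2)

/-- The continuous linear map `v ↦ g ⬝ᵥ v` (differential given by a gradient vector). -/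
def dotCLM {n : ℕ} (g : Fin n → ℝ) : (Fin n → ℝ) →L[ℝ] ℝ :=
  ∑ i, g i • ContinuousLinearMap.proj i

/-- The continuous linear map `v ↦ A *ᵥ v` (differential given by a Jacobian matrix). -/
def mulVecCLM {m n : ℕ} (A : Matrix (Fin m) (Fin n) ℝ) : (Fin n → ℝ) →L[ℝ] (Fin m → ℝ) :=
  LinearMap.toContinuousLinearMap A.mulVecLin

/-- Operator (spectral) norm of a matrix, i.e. its `ℓ² → ℓ²` operator norm. -/
def matOpNorm {m n : ℕ} (A : Matrix (Fin m) (Fin n) ℝ) : ℝ :=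
  ‖LinearMap.toContinuousLinearMap (Matrix.toEuclideanLin A)‖

lemma dotProduct_sq_le {n : ℕ} (a b : Fin n → ℝ) : (a ⬝ᵥ b) ^ 2 ≤ (a ⬝ᵥ a) * (b ⬝ᵥ b) := by
  have := Finset.sum_mul_sq_le_sq_mul_sq Finset.univ a b
  simpa [dotProduct, pow_two] using this

lemma dotProduct_self_nonneg_real {n : ℕ} (a : Fin n → ℝ) : 0 ≤ a ⬝ᵥ a :=
  Finset.sum_nonneg fun i _ => mul_self_nonneg (a i)

lemma sq_le_dotProduct_self {n : ℕ} (a : Fin n → ℝ) (i : Fin n) : a i ^ 2 ≤ a ⬝ᵥ a := by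
  rw [pow_two]
  exact Finset.single_le_sum (f := fun i => a i * a i) (fun i _ => mul_self_nonneg (a i))
    (Finset.mem_univ i)

lemma dotProduct_mulVec_symm {n : ℕ} {A : Matrix (Fin n) (Fin n) ℝ} (hA : A.IsSymm)
    (a b : Fin n → ℝ) : a ⬝ᵥ (A *ᵥ b) = b ⬝ᵥ (A *ᵥ a) := by
  rw [dotProduct_mulVec, ← mulVec_transpose, hA.eq, dotProduct_comm]

lemma transpose_mulVec_dotProduct {m n : ℕ} (A : Matrix (Fin m) (Fin n) ℝ)
    (a : Fin m → ℝ) (b : Fin n → ℝ) : (Aᵀ *ᵥ a) ⬝ᵥ b = a ⬝ᵥ (A *ᵥ b) := by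
  rw [dotProduct_mulVec, mulVec_transpose]

lemma dotProduct_self_lt_of_euclNorm_lt {n : ℕ} {v : Fin n → ℝ} {M : ℝ} (hv : euclNorm v < M) :
    v ⬝ᵥ v < M ^ 2 := by
  have h0 : 0 ≤ euclNorm v := Real.sqrt_nonneg _
  have h1 : euclNorm v ^ 2 = v ⬝ᵥ v := by
    unfold euclNorm
    rw [Real.sq_sqrt (Finset.sum_nonneg fun i _ => sq_nonneg _)]
    simp [dotProduct, pow_two]
  rw [← h1]
  gcongr

lemma mulVec_dotProduct_self_le {m n : ℕ} {A : Matrix (Fin m) (Fin n) ℝ} {M : ℝ}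
    (hA : matOpNorm A < M) (v : Fin n → ℝ) :
    (A *ᵥ v) ⬝ᵥ (A *ᵥ v) ≤ M ^ 2 * (v ⬝ᵥ v) := by
  have key := (LinearMap.toContinuousLinearMap (Matrix.toEuclideanLin A)).le_of_opNorm_le hA.le
    (WithLp.toLp 2 v)
  have h2 := pow_le_pow_left₀ (norm_nonneg _) key 2
  rw [mul_pow, EuclideanSpace.norm_sq_eq, EuclideanSpace.norm_sq_eq] at h2
  simpa [dotProduct, pow_two, Matrix.toLpLin_apply] using h2

/-- `|Aᵀ w| ≤ M |w|`, squared: the transpose satisfies the same norm bound as the matrix. -/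
lemma transpose_mulVec_dotProduct_self_le {m n : ℕ} {A : Matrix (Fin m) (Fin n) ℝ} {M : ℝ}
    (hA : matOpNorm A < M) (w : Fin m → ℝ) :
    (Aᵀ *ᵥ w) ⬝ᵥ (Aᵀ *ᵥ w) ≤ M ^ 2 * (w ⬝ᵥ w) := by
  set z := Aᵀ *ᵥ w with hz
  have h1 : z ⬝ᵥ z = w ⬝ᵥ (A *ᵥ z) := transpose_mulVec_dotProduct A w z
  have h2 := dotProduct_sq_le w (A *ᵥ z)
  have h3 := mulVec_dotProduct_self_le hA z
  have h4 := dotProduct_self_nonneg_real w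
  have h5 := dotProduct_self_nonneg_real z
  rw [← h1] at h2
  rcases h5.eq_or_lt with h6 | h6
  · rw [← h6]; positivity
  · have := mul_le_mul_of_nonneg_left h3 h4
    nlinarith

/-- `(A Aᵀ)⁻¹ ≺ D² I` implies `|w| ≤ |D| |Aᵀ w|`, squared. -/
lemma dotProduct_self_le_transpose_mulVec {m n : ℕ} {A : Matrix (Fin m) (Fin n) ℝ} {D : ℝ}
    (hu : IsUnit (A * Aᵀ))
    (hD : ((D ^ 2 • (1 : Matrix (Fin m) (Fin m) ℝ)) - (A * Aᵀ)⁻¹).PosDef) (w : Fin m → ℝ) :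
    w ⬝ᵥ w ≤ D ^ 2 * ((Aᵀ *ᵥ w) ⬝ᵥ (Aᵀ *ᵥ w)) := by
  -- Cauchy-Schwarz for `Aᵀ y` and `Aᵀ w`, where `A Aᵀ y = w`, so that `|Aᵀ y|² = w ⬝ (A Aᵀ)⁻¹ w`.
  set y := (A * Aᵀ)⁻¹ *ᵥ w with hy
  have hAy : A *ᵥ (Aᵀ *ᵥ y) = w := by
    rw [mulVec_mulVec, hy, mulVec_mulVec,
      Matrix.mul_nonsing_inv _ ((Matrix.isUnit_iff_isUnit_det _).1 hu), one_mulVec]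
  have h1 : (Aᵀ *ᵥ w) ⬝ᵥ (Aᵀ *ᵥ y) = w ⬝ᵥ w := by
    rw [transpose_mulVec_dotProduct, hAy]
  have h2 : (Aᵀ *ᵥ y) ⬝ᵥ (Aᵀ *ᵥ y) = w ⬝ᵥ y := by
    rw [transpose_mulVec_dotProduct, hAy, dotProduct_comm]
  have h3 : w ⬝ᵥ y ≤ D ^ 2 * (w ⬝ᵥ w) := by
    have := hD.posSemidef.dotProduct_mulVec_nonneg w
    simp only [star_trivial, sub_mulVec, smul_mulVec, one_mulVec, dotProduct_sub,
      dotProduct_smul, smul_eq_mul] at this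
    linarith
  have h4 := dotProduct_sq_le (Aᵀ *ᵥ w) (Aᵀ *ᵥ y)
  rw [h1, h2] at h4
  have h5 := dotProduct_self_nonneg_real w
  have h6 := dotProduct_self_nonneg_real (Aᵀ *ᵥ w)
  rcases h5.eq_or_lt with h7 | h7
  · rw [← h7]; positivity
  · have := mul_le_mul_of_nonneg_left h3 h6
    nlinarith

/-- If `J T Jᵀ w = J T g`, then `g` and its `T`-projection `Jᵀ w` satisfy the Pythagorean identity. -/
lemma projection_identity {m n : ℕ} {J : Matrix (Fin m) (Fin n) ℝ} {T : Matrix (Fin n) (Fin n) ℝ}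
    (hT : T.IsSymm) {g : Fin n → ℝ} {w : Fin m → ℝ}
    (hw : (J * T * Jᵀ) *ᵥ w = (J * T) *ᵥ g) :
    g ⬝ᵥ (T *ᵥ (Jᵀ *ᵥ w)) = (Jᵀ *ᵥ w) ⬝ᵥ (T *ᵥ (Jᵀ *ᵥ w)) ∧
    (g - Jᵀ *ᵥ w) ⬝ᵥ (T *ᵥ (g - Jᵀ *ᵥ w)) =
      g ⬝ᵥ (T *ᵥ g) - (Jᵀ *ᵥ w) ⬝ᵥ (T *ᵥ (Jᵀ *ᵥ w)) := by
  have h1 : g ⬝ᵥ (T *ᵥ (Jᵀ *ᵥ w)) = (Jᵀ *ᵥ w) ⬝ᵥ (T *ᵥ (Jᵀ *ᵥ w)) := by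
    rw [dotProduct_mulVec_symm hT, transpose_mulVec_dotProduct, transpose_mulVec_dotProduct,
      mulVec_mulVec, ← hw]
    simp only [mulVec_mulVec, Matrix.mul_assoc]
  refine ⟨h1, ?_⟩
  have h2 := dotProduct_mulVec_symm hT (Jᵀ *ᵥ w) g
  simp only [mulVec_sub, dotProduct_sub, sub_dotProduct]
  linarith

lemma dotProduct_mulVec_bounds {n : ℕ} {T : Matrix (Fin n) (Fin n) ℝ} {lmin lmax : ℝ}
    (hTlb : (T - lmin • (1 : Matrix (Fin n) (Fin n) ℝ)).PosSemidef)
    (hTub : (lmax • (1 : Matrix (Fin n) (Fin n) ℝ) - T).PosSemidef) (v : Fin n → ℝ) :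
    lmin * (v ⬝ᵥ v) ≤ v ⬝ᵥ (T *ᵥ v) ∧ v ⬝ᵥ (T *ᵥ v) ≤ lmax * (v ⬝ᵥ v) := by
  have h1 := hTlb.dotProduct_mulVec_nonneg v
  have h2 := hTub.dotProduct_mulVec_nonneg v
  simp only [star_trivial, sub_mulVec, smul_mulVec, one_mulVec, dotProduct_sub,
    dotProduct_smul, smul_eq_mul] at h1 h2
  exact ⟨by linarith, by linarith⟩

/-- Each entry of the multiplier `w = (J T Jᵀ)⁻¹ J T ∇f` is at most the penalty weight. -/
lemma abs_multiplier_le {m n : ℕ} {J : Matrix (Fin m) (Fin n) ℝ} {T : Matrix (Fin n) (Fin n) ℝ}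
    {lmin lmax M D : ℝ} (hlmin : 0 < lmin) (hminmax : lmin ≤ lmax) (hT : T.IsSymm)
    (hTlb : (T - lmin • (1 : Matrix (Fin n) (Fin n) ℝ)).PosSemidef)
    (hTub : (lmax • (1 : Matrix (Fin n) (Fin n) ℝ) - T).PosSemidef)
    {g : Fin n → ℝ} (hg : euclNorm g < M) (hJ : matOpNorm J < M) (hu : IsUnit (J * Jᵀ))
    (hD : ((D ^ 2 • (1 : Matrix (Fin m) (Fin m) ℝ)) - (J * Jᵀ)⁻¹).PosDef)
    {w : Fin m → ℝ} (hw : (J * T * Jᵀ) *ᵥ w = (J * T) *ᵥ g) (i : Fin m) :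
    |w i| ≤ lmax / lmin * (M * D) ^ 2 := by
  obtain ⟨-, hq⟩ := projection_identity hT hw
  have hz1 := dotProduct_self_le_transpose_mulVec hu hD w
  have hz2 := transpose_mulVec_dotProduct_self_le hJ w
  set z := Jᵀ *ᵥ w
  have hq0 := (dotProduct_mulVec_bounds hTlb hTub (g - z)).1
  have hq1 := dotProduct_self_nonneg_real (g - z)
  have hq2 := (dotProduct_mulVec_bounds hTlb hTub z).1
  have hq3 := (dotProduct_mulVec_bounds hTlb hTub g).2
  have hg2 := dotProduct_self_lt_of_euclNorm_lt hg
  have hlmax : 0 < lmax := hlmin.trans_le hminmax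
  have hw0 := dotProduct_self_nonneg_real w
  have hr : 1 ≤ lmax / lmin := (one_le_div hlmin).2 hminmax
  have hzM : z ⬝ᵥ z ≤ lmax / lmin * M ^ 2 := by
    rw [div_mul_eq_mul_div, le_div_iff₀ hlmin]
    have := mul_nonneg hlmin.le hq1
    have := mul_le_mul_of_nonneg_left hg2.le hlmax.le
    linarith
  have hwC : w ⬝ᵥ w ≤ (lmax / lmin * (M * D) ^ 2) ^ 2 := by
    rcases hw0.eq_or_lt with h0 | h0
    · rw [← h0]; positivity
    · have hMD : 1 ≤ (M * D) ^ 2 := by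
        have := mul_le_mul_of_nonneg_left hz2 (sq_nonneg D)
        by_contra! hlt
        nlinarith
      have h1 : w ⬝ᵥ w ≤ lmax / lmin * (M * D) ^ 2 := by
        have := mul_le_mul_of_nonneg_left hzM (sq_nonneg D)
        linarith
      have h2 : 1 ≤ lmax / lmin * (M * D) ^ 2 := one_le_mul_of_one_le_of_one_le hr hMD
      nlinarith
  exact abs_le_of_sq_le_sq ((sq_le_dotProduct_self w i).trans hwC) (by positivity)

/-- The constraint values are driven linearly: `J ẋ = -K h`. Here `r` stands for `K h`. -/
lemma mulVec_velocity {m n : ℕ} {J : Matrix (Fin m) (Fin n) ℝ} {T : Matrix (Fin n) (Fin n) ℝ}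
    (hS : IsUnit (J * T * Jᵀ)) (g : Fin n → ℝ) (r : Fin m → ℝ) :
    J *ᵥ (-(T *ᵥ (g + Jᵀ *ᵥ (-((J * T * Jᵀ)⁻¹ *ᵥ ((J * T) *ᵥ g - r)))))) = -r := by
  have hdet := (Matrix.isUnit_iff_isUnit_det _).1 hS
  have h1 : J *ᵥ (T *ᵥ (Jᵀ *ᵥ ((J * T * Jᵀ)⁻¹ *ᵥ ((J * T) *ᵥ g - r)))) = (J * T) *ᵥ g - r := by
    rw [mulVec_mulVec, mulVec_mulVec, mulVec_mulVec, Matrix.mul_nonsing_inv _ hdet, one_mulVec]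
  rw [mulVec_neg, mulVec_add, mulVec_add, mulVec_neg, mulVec_neg, mulVec_neg, h1, mulVec_mulVec]
  abel

/-- The derivative of `f` along the flow is at most `∑ C |rᵢ|`, where `r = K h` and `C` is the
penalty weight. -/
lemma dot_velocity_le {m n : ℕ} {J : Matrix (Fin m) (Fin n) ℝ} {T : Matrix (Fin n) (Fin n) ℝ}
    {lmin lmax M D : ℝ} (hlmin : 0 < lmin) (hminmax : lmin ≤ lmax) (hT : T.IsSymm)
    (hTlb : (T - lmin • (1 : Matrix (Fin n) (Fin n) ℝ)).PosSemidef)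
    (hTub : (lmax • (1 : Matrix (Fin n) (Fin n) ℝ) - T).PosSemidef)
    {g : Fin n → ℝ} (hg : euclNorm g < M) (hJ : matOpNorm J < M) (hu : IsUnit (J * Jᵀ))
    (hD : ((D ^ 2 • (1 : Matrix (Fin m) (Fin m) ℝ)) - (J * Jᵀ)⁻¹).PosDef)
    (hS : IsUnit (J * T * Jᵀ)) (r : Fin m → ℝ) :
    g ⬝ᵥ (-(T *ᵥ (g + Jᵀ *ᵥ (-((J * T * Jᵀ)⁻¹ *ᵥ ((J * T) *ᵥ g - r)))))) ≤
      lmax / lmin * (M * D) ^ 2 * ∑ i, |r i| := by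
  have hdet := (Matrix.isUnit_iff_isUnit_det _).1 hS
  set w := (J * T * Jᵀ)⁻¹ *ᵥ ((J * T) *ᵥ g) with hwdef
  have hw : (J * T * Jᵀ) *ᵥ w = (J * T) *ᵥ g := by
    rw [hwdef, mulVec_mulVec, Matrix.mul_nonsing_inv _ hdet, one_mulVec]
  have hSsymm : (J * T * Jᵀ)⁻¹.IsSymm := by
    rw [Matrix.IsSymm, Matrix.transpose_nonsing_inv]
    simp [Matrix.transpose_mul, hT.eq, Matrix.mul_assoc]
  obtain ⟨hp, hq⟩ := projection_identity hT hw
  have hq0 := (dotProduct_mulVec_bounds hTlb hTub (g - Jᵀ *ᵥ w)).1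
  have hq1 := mul_nonneg hlmin.le (dotProduct_self_nonneg_real (g - Jᵀ *ᵥ w))
  have hcross : g ⬝ᵥ (T *ᵥ (Jᵀ *ᵥ ((J * T * Jᵀ)⁻¹ *ᵥ r))) = w ⬝ᵥ r := by
    rw [dotProduct_mulVec_symm hT, transpose_mulVec_dotProduct, mulVec_mulVec, dotProduct_comm,
      dotProduct_mulVec_symm hSsymm, dotProduct_comm]
  have hexp : g ⬝ᵥ (-(T *ᵥ (g + Jᵀ *ᵥ (-((J * T * Jᵀ)⁻¹ *ᵥ ((J * T) *ᵥ g - r)))))) =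
      -(g ⬝ᵥ (T *ᵥ g)) + g ⬝ᵥ (T *ᵥ (Jᵀ *ᵥ w))
        - g ⬝ᵥ (T *ᵥ (Jᵀ *ᵥ ((J * T * Jᵀ)⁻¹ *ᵥ r))) := by
    rw [mulVec_sub (J * T * Jᵀ)⁻¹, ← hwdef]
    simp only [mulVec_add, mulVec_neg, mulVec_sub, dotProduct_add, dotProduct_neg, dotProduct_sub]
    ring
  have hsum : -(w ⬝ᵥ r) ≤ lmax / lmin * (M * D) ^ 2 * ∑ i, |r i| := by
    rw [Finset.mul_sum, dotProduct, ← Finset.sum_neg_distrib]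
    refine Finset.sum_le_sum fun i _ => ?_
    calc -(w i * r i) ≤ |w i * r i| := neg_le_abs _
      _ = |w i| * |r i| := abs_mul _ _
      _ ≤ _ := mul_le_mul_of_nonneg_right
        (abs_multiplier_le hlmin hminmax hT hTlb hTub hg hJ hu hD hw i) (abs_nonneg _)
  rw [hexp, hcross, hp]
  linarith

lemma eq_exp_of_hasDerivAt {y : ℝ → ℝ} {k : ℝ} (hy : ∀ t, 0 ≤ t → HasDerivAt y (-(k * y t)) t)
    {t : ℝ} (ht : 0 ≤ t) : y t = y 0 * Real.exp (-(k * t)) := by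
  have hd : ∀ s, 0 ≤ s → HasDerivAt (fun s => y s * Real.exp (k * s)) 0 s := by
    intro s hs
    have h1 : HasDerivAt (fun s => Real.exp (k * s)) (Real.exp (k * s) * (k * 1)) s :=
      ((hasDerivAt_id s).const_mul k).exp
    exact ((hy s hs).mul h1).congr_deriv (by ring)
  have hc := constant_of_has_deriv_right_zero (a := 0) (b := t)
    (fun s hs => (hd s hs.1).continuousAt.continuousWithinAt)
    (fun s hs => (hd s hs.1).hasDerivWithinAt) t ⟨ht, le_rfl⟩
  simp only [mul_zero, Real.exp_zero, mul_one] at hc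
  rw [← hc, mul_assoc, ← Real.exp_add]
  simp

/-- Feedback linearization for equality-constrained optimization: the merit function
`ℓ(x) = f(x) + (λ_max/λ_min)(MD)² Σᵢ |hᵢ(x)|` is non-increasing along the trajectory. -/
theorem stmt_1
    {n m : ℕ}
    (f : (Fin n → ℝ) → ℝ) (h : (Fin n → ℝ) → (Fin m → ℝ))
    (gradf : (Fin n → ℝ) → (Fin n → ℝ))
    (J : (Fin n → ℝ) → Matrix (Fin m) (Fin n) ℝ)
    (T : (Fin n → ℝ) → Matrix (Fin n) (Fin n) ℝ)
    (lmin lmax : ℝ) (hlmin : 0 < lmin) (hminmax : lmin ≤ lmax)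
    (hTsymm : ∀ p, (T p).IsSymm)
    (hTlb : ∀ p, (T p - lmin • (1 : Matrix (Fin n) (Fin n) ℝ)).PosSemidef)
    (hTub : ∀ p, (lmax • (1 : Matrix (Fin n) (Fin n) ℝ) - T p).PosSemidef)
    (hgrad : ∀ p, HasFDerivAt f (dotCLM (gradf p)) p)
    (hJac : ∀ p, HasFDerivAt h (mulVecCLM (J p)) p)
    (M : ℝ) (hM : ∀ p, euclNorm (gradf p) < M ∧ matOpNorm (J p) < M)
    (fmin : ℝ) (hfmin : ∀ p, fmin ≤ f p)
    (D : ℝ) (hJJ : ∀ p, IsUnit (J p * (J p)ᵀ))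
    (hD : ∀ p, ((D ^ 2 • (1 : Matrix (Fin m) (Fin m) ℝ)) - (J p * (J p)ᵀ)⁻¹).PosDef)
    (k : Fin m → ℝ) (hk : ∀ i, 0 < k i)
    (x : ℝ → (Fin n → ℝ)) (lam : ℝ → (Fin m → ℝ))
    (hInv : ∀ t, 0 ≤ t → IsUnit (J (x t) * T (x t) * (J (x t))ᵀ))
    (hlam : ∀ t, 0 ≤ t →
      lam t = -((J (x t) * T (x t) * (J (x t))ᵀ)⁻¹ *ᵥ
        ((J (x t) * T (x t)) *ᵥ gradf (x t) - Matrix.diagonal k *ᵥ h (x t))))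
    (hx : ∀ t, 0 ≤ t →
      HasDerivAt x (-(T (x t) *ᵥ (gradf (x t) + (J (x t))ᵀ *ᵥ lam t))) t) :
    AntitoneOn
      (fun t => f (x t) + lmax / lmin * (M * D) ^ 2 * ∑ i, |h (x t) i|)
      (Set.Ici 0) := by
  set C := lmax / lmin * (M * D) ^ 2 with hC
  have hy : ∀ i t, 0 ≤ t → HasDerivAt (fun s => h (x s) i) (-(k i * h (x t) i)) t := by
    intro i t ht
    have h1 := (hJac (x t)).comp_hasDerivAt t (hx t ht)
    have h2 := (hasDerivAt_pi.1 h1) i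
    have h3 := congrFun (mulVec_velocity (hInv t ht) (gradf (x t)) (diagonal k *ᵥ h (x t))) i
    rw [← hlam t ht] at h3
    refine h2.congr_deriv ?_
    simpa [mulVecCLM, mulVec_diagonal] using h3
  have habs : ∀ i t, 0 ≤ t → |h (x t) i| = |h (x 0) i| * Real.exp (-(k i * t)) := by
    intro i t ht
    rw [eq_exp_of_hasDerivAt (hy i) ht, abs_mul, Real.abs_exp]
  have hf : ∀ t, 0 ≤ t → ∃ v, HasDerivAt (fun s => f (x s)) v t ∧
      v ≤ C * ∑ i, k i * |h (x t) i| := by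
    intro t ht
    refine ⟨_, (hgrad (x t)).comp_hasDerivAt t (hx t ht), ?_⟩
    have h1 := dot_velocity_le hlmin hminmax (hTsymm (x t)) (hTlb _) (hTub _) (hM (x t)).1
      (hM (x t)).2 (hJJ _) (hD _) (hInv t ht) (diagonal k *ᵥ h (x t))
    rw [← hlam t ht] at h1
    simpa only [dotCLM, dotProduct, _root_.sum_apply, _root_.smul_apply,
      ContinuousLinearMap.proj_apply, smul_eq_mul, mulVec_diagonal, abs_mul,
      fun i => abs_of_pos (hk i)] using h1
  -- Replacing `|hᵢ (x t)|` by its exponential form makes the merit function differentiable.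
  have hF : ∀ t, 0 ≤ t → ∃ v ≤ 0, HasDerivAt
      (fun t => f (x t) + C * ∑ i, |h (x 0) i| * Real.exp (-(k i * t))) v t := by
    intro t ht
    obtain ⟨v, hv, hle⟩ := hf t ht
    have hs : HasDerivAt (fun t => ∑ i, |h (x 0) i| * Real.exp (-(k i * t)))
        (∑ i, |h (x 0) i| * (Real.exp (-(k i * t)) * (-(k i * 1)))) t :=
      HasDerivAt.fun_sum fun i _ => ((((hasDerivAt_id t).const_mul (k i)).neg).exp).const_mul _
    refine ⟨_, ?_, hv.add (hs.const_mul C)⟩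
    have : ∑ i, |h (x 0) i| * (Real.exp (-(k i * t)) * (-(k i * 1))) =
        -∑ i, k i * |h (x t) i| := by
      rw [← Finset.sum_neg_distrib]
      refine Finset.sum_congr rfl fun i _ => ?_
      rw [habs i t ht]; ring
    rw [this]
    linarith
  have hanti : AntitoneOn (fun t => f (x t) + C * ∑ i, |h (x 0) i| * Real.exp (-(k i * t)))
      (Set.Ici 0) := by
    refine antitoneOn_of_deriv_nonpos (convex_Ici 0) ?_ ?_ ?_
    · intro t ht
      obtain ⟨v, -, hv⟩ := hF t ht
      exact hv.continuousAt.continuousWithinAt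
    · intro t ht
      obtain ⟨v, -, hv⟩ := hF t (interior_subset ht)
      exact hv.differentiableAt.differentiableWithinAt
    · intro t ht
      obtain ⟨v, hv0, hv⟩ := hF t (interior_subset ht)
      rwa [hv.deriv]
  refine hanti.congr fun t ht => ?_
  simp only [fun i => habs i t ht]
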